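/- arXiv:1205.0188 — 9 statements merged into one kernel-verified Lean document; each statement's English description precedes it below -/
import Mathlib

section
/- Let h₀ = √((8−√19)/72). Let u₁, u₂, u₃ be pairwise linearly independent unit vectors in the Euclidean plane ℝ², and let d₁, d₂, d₃ be real numbers with d₁ ≥ 1/4, d₂ ≥ h₀ and d₃ ≥ 1/4. Then the centrally symmetric convex hexagon H = {p ∈ ℝ² : |⟨p,u₁⟩| ≤ d₁ and |⟨p,u₂⟩| ≤ d₂ and |⟨p,u₃⟩| ≤ d₃} has two-dimensional Lebesgue measure at least h₀·√(1 − 4h₀²). -/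
open Real MeasureTheory RealInnerProductSpace

/-- The parameter `h₀ = √((8−√19)/72)` of the extremal nonpositively curved
Dyck's surface. -/
noncomputable def h₀ : ℝ := Real.sqrt ((8 - Real.sqrt 19) / 72)

theorem slab_integral (R φ : ℝ) (hR : 0 < R) (h0 : 0 ≤ φ) (h1 : φ < π / 2) :
    ∫ x in (-(R * sin φ))..(R * sin φ), (√(R ^ 2 - x ^ 2) + √(R ^ 2 - x ^ 2))
      = R ^ 2 * (2 * sin φ * cos φ + 2 * φ) := by
  have hs0 : 0 ≤ sin φ := sin_nonneg_of_nonneg_of_le_pi h0 (by linarith [pi_pos])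
  have hc0 : 0 < cos φ := cos_pos_of_mem_Ioo ⟨by linarith [pi_pos], h1⟩
  have hsc := sin_sq_add_cos_sq φ
  have hs1 : sin φ < 1 := by nlinarith
  have hd0 : 0 ≤ R * sin φ := by positivity
  have hdR : R * sin φ < R := by nlinarith
  have key : ∀ x ∈ Set.uIcc (-(R * sin φ)) (R * sin φ),
      HasDerivAt (fun x => x * √(R ^ 2 - x ^ 2) + R ^ 2 * arcsin (x / R))
        (√(R ^ 2 - x ^ 2) + √(R ^ 2 - x ^ 2)) x := by
    intro x hx
    rw [Set.uIcc_of_le (by linarith)] at hx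
    have hx1 : -R < x := by linarith [hx.1]
    have hx2 : x < R := by linarith [hx.2]
    have hpos : 0 < R ^ 2 - x ^ 2 := by nlinarith
    have e1 : HasDerivAt (fun x : ℝ => R ^ 2 - x ^ 2) (-(2 * x)) x := by
      simpa using (hasDerivAt_pow 2 x).const_sub (R ^ 2)
    have e2 := e1.sqrt hpos.ne'
    have e3 := (hasDerivAt_id x).mul e2
    have e4 : HasDerivAt (fun x : ℝ => x / R) (1 / R) x := (hasDerivAt_id x).div_const R
    have n1 : x / R ≠ -1 := by
      intro h; rw [div_eq_iff hR.ne'] at h; linarith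
    have n2 : x / R ≠ 1 := by
      intro h; rw [div_eq_iff hR.ne'] at h; linarith
    have e5 := (hasDerivAt_arcsin n1 n2).comp x e4
    have e6 := e3.add (e5.const_mul (R ^ 2))
    refine HasDerivAt.congr_deriv (f := fun x => x * √(R ^ 2 - x ^ 2) + R ^ 2 * arcsin (x / R)) e6 ?_
    have hq : √(1 - (x / R) ^ 2) = √(R ^ 2 - x ^ 2) / R := by
      have hy : 1 - (x / R) ^ 2 = (R ^ 2 - x ^ 2) / R ^ 2 := by field_simp
      rw [hy, sqrt_div hpos.le, sqrt_sq hR.le]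
    rw [hq]
    have hS : 0 < √(R ^ 2 - x ^ 2) := sqrt_pos.2 hpos
    have hSS := sq_sqrt hpos.le
    simp only [id]
    field_simp
    rw [hSS]
    ring
  rw [intervalIntegral.integral_eq_sub_of_hasDerivAt key
    (Continuous.intervalIntegrable (by fun_prop) _ _)]
  have hr : √(R ^ 2 - (R * sin φ) ^ 2) = R * cos φ := by
    rw [sqrt_eq_iff_mul_self_eq_of_pos (by positivity)]
    linear_combination R ^ 2 * hsc
  have ha : arcsin (R * sin φ / R) = φ := by
    rw [mul_div_cancel_left₀ _ hR.ne', arcsin_sin (by linarith [pi_pos]) h1.le]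
  have hb : arcsin (-(R * sin φ) / R) = -φ := by
    rw [neg_div, arcsin_neg, ha]
  simp only [ha, hb, neg_sq, hr]
  ring

theorem slab_region (R φ : ℝ) (hR : 0 < R) (h0 : 0 ≤ φ) (h1 : φ < π / 2) :
    volume (regionBetween (fun x => -√(R ^ 2 - x ^ 2)) (fun x => √(R ^ 2 - x ^ 2))
      (Set.Icc (-(R * sin φ)) (R * sin φ)))
      = ENNReal.ofReal (R ^ 2 * (2 * sin φ * cos φ + 2 * φ)) := by
  have hs0 : 0 ≤ sin φ := sin_nonneg_of_nonneg_of_le_pi h0 (by linarith [pi_pos])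
  have hd0 : 0 ≤ R * sin φ := by positivity
  have hc1 : Continuous (fun x : ℝ => -√(R ^ 2 - x ^ 2)) := by fun_prop
  have hc2 : Continuous (fun x : ℝ => √(R ^ 2 - x ^ 2)) := by fun_prop
  rw [Measure.volume_eq_prod, volume_regionBetween_eq_integral
    (hc1.continuousOn.integrableOn_compact isCompact_Icc)
    (hc2.continuousOn.integrableOn_compact isCompact_Icc) measurableSet_Icc
    (fun x _ => by linarith [sqrt_nonneg (R ^ 2 - x ^ 2)]),
    integral_Icc_eq_integral_Ioc, ← intervalIntegral.integral_of_le (by linarith),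
    ← slab_integral R φ hR h0 h1]
  congr 2
  ext x
  simp

theorem slab_volume (u : EuclideanSpace ℝ (Fin 2)) (hu : ‖u‖ = 1)
    (R φ : ℝ) (hR : 0 < R) (h0 : 0 ≤ φ) (h1 : φ < π / 2) :
    volume {p : EuclideanSpace ℝ (Fin 2) | p ∈ Metric.ball 0 R ∧ |⟪p, u⟫| ≤ R * sin φ}
      = ENNReal.ofReal (R ^ 2 * (2 * sin φ * cos φ + 2 * φ)) := by
  obtain ⟨b, hb⟩ : ∃ b : OrthonormalBasis (Fin 2) ℝ (EuclideanSpace ℝ (Fin 2)), b 0 = u := by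
    have ho : Orthonormal ℝ (({0} : Set (Fin 2)).domRestrict (fun _ : Fin 2 => u)) := by
      constructor
      · intro i; exact hu
      · intro i j hij; exact absurd (Subsingleton.elim i j) hij
    obtain ⟨b, hb⟩ := ho.exists_orthonormalBasis_extension_of_card_eq (by simp)
    exact ⟨b, hb 0 rfl⟩
  rw [← slab_region R φ hR h0 h1]
  have m1 := b.measurePreserving_repr
  have m2 := EuclideanSpace.volume_preserving_symm_measurableEquiv_toLp (Fin 2)
  have m3 := volume_preserving_finTwoArrow ℝ
  have m := m3.comp (m2.comp m1)
  have hc1 : Continuous (fun x : ℝ => -√(R ^ 2 - x ^ 2)) := by fun_prop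
  have hc2 : Continuous (fun x : ℝ => √(R ^ 2 - x ^ 2)) := by fun_prop
  rw [← m.measure_preimage (measurableSet_regionBetween hc1.measurable hc2.measurable
    measurableSet_Icc).nullMeasurableSet]
  congr 1
  ext p
  have hn : ‖p‖ ^ 2 = (b.repr p 0) ^ 2 + (b.repr p 1) ^ 2 := by
    rw [← b.repr.norm_map p, EuclideanSpace.norm_sq_eq]; simp
  have hi : ⟪p, u⟫ = b.repr p 0 := by
    rw [b.repr_apply_apply, hb, real_inner_comm]
  have hball : p ∈ Metric.ball 0 R ↔ (b.repr p 1) ^ 2 < R ^ 2 - (b.repr p 0) ^ 2 := by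
    rw [mem_ball_zero_iff, ← sq_lt_sq₀ (norm_nonneg p) hR.le, hn]
    constructor <;> intro h <;> linarith
  have hrhs : (p ∈ (MeasurableEquiv.finTwoArrow ∘ (MeasurableEquiv.toLp 2 (Fin 2 → ℝ)).symm ∘ b.repr) ⁻¹'
      regionBetween (fun x => -√(R ^ 2 - x ^ 2)) (fun x => √(R ^ 2 - x ^ 2))
      (Set.Icc (-(R * sin φ)) (R * sin φ))) ↔
      (b.repr p 0 ∈ Set.Icc (-(R * sin φ)) (R * sin φ) ∧
        b.repr p 1 ∈ Set.Ioo (-√(R ^ 2 - (b.repr p 0) ^ 2)) (√(R ^ 2 - (b.repr p 0) ^ 2))) := Iff.rfl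
  rw [Set.mem_ofPred_eq]
  refine Iff.trans ?_ hrhs.symm
  rw [hball, hi, abs_le, and_comm]
  refine and_congr Iff.rfl ?_
  rw [Set.mem_Ioo, ← abs_lt, lt_sqrt (abs_nonneg _), sq_abs]

theorem hex_bound (u₁ u₂ u₃ : EuclideanSpace ℝ (Fin 2))
    (hu₁ : ‖u₁‖ = 1) (hu₂ : ‖u₂‖ = 1) (hu₃ : ‖u₃‖ = 1) (R φ₁ φ₂ φ₃ : ℝ) (hR : 0 < R)
    (h1 : 0 ≤ φ₁) (h1' : φ₁ < π / 2) (h2 : 0 ≤ φ₂) (h2' : φ₂ < π / 2)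
    (h3 : 0 ≤ φ₃) (h3' : φ₃ < π / 2) (hsum : φ₁ + φ₂ + φ₃ = π) :
    ENNReal.ofReal (2 * R ^ 2 * (sin φ₁ * cos φ₁ + sin φ₂ * cos φ₂ + sin φ₃ * cos φ₃)) ≤
    volume {p : EuclideanSpace ℝ (Fin 2) |
        |⟪p, u₁⟫| ≤ R * sin φ₁ ∧ |⟪p, u₂⟫| ≤ R * sin φ₂ ∧ |⟪p, u₃⟫| ≤ R * sin φ₃} := by
  set B : Set (EuclideanSpace ℝ (Fin 2)) := Metric.ball 0 R with hB
  set H := {p : EuclideanSpace ℝ (Fin 2) |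
        |⟪p, u₁⟫| ≤ R * sin φ₁ ∧ |⟪p, u₂⟫| ≤ R * sin φ₂ ∧ |⟪p, u₃⟫| ≤ R * sin φ₃} with hH
  have hBv : volume.real B = π * R ^ 2 := by
    rw [measureReal_def, hB, EuclideanSpace.volume_ball_fin_two]
    simp [hR.le, pi_pos.le]
    ring
  have hBf : volume B ≠ ⊤ := measure_ball_lt_top.ne
  have hd : ∀ (u : EuclideanSpace ℝ (Fin 2)) (φ : ℝ), ‖u‖ = 1 → 0 ≤ φ → φ < π / 2 →
      volume.real (B \ {p | p ∈ B ∧ |⟪p, u⟫| ≤ R * sin φ}) =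
        π * R ^ 2 - R ^ 2 * (2 * sin φ * cos φ + 2 * φ) := by
    intro u φ hu h0 h1
    have hs0 : 0 ≤ sin φ := sin_nonneg_of_nonneg_of_le_pi h0 (by linarith [pi_pos])
    have hc0 : 0 < cos φ := cos_pos_of_mem_Ioo ⟨by linarith [pi_pos], h1⟩
    have hm : MeasurableSet {p : EuclideanSpace ℝ (Fin 2) | p ∈ B ∧ |⟪p, u⟫| ≤ R * sin φ} := by
      have hm2 : MeasurableSet {p : EuclideanSpace ℝ (Fin 2) | |⟪p, u⟫| ≤ R * sin φ} :=
        measurableSet_le (Continuous.measurable (by fun_prop)) measurable_const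
      exact Metric.isOpen_ball.measurableSet.inter hm2
    rw [measureReal_sdiff (fun p hp => hp.1) hm, hBv, measureReal_def, slab_volume u hu R φ hR h0 h1,
      ENNReal.toReal_ofReal (by positivity)]
  have hsub : B ⊆ (B ∩ H) ∪ ((B \ {p | p ∈ B ∧ |⟪p, u₁⟫| ≤ R * sin φ₁}) ∪
      ((B \ {p | p ∈ B ∧ |⟪p, u₂⟫| ≤ R * sin φ₂}) ∪
       (B \ {p | p ∈ B ∧ |⟪p, u₃⟫| ≤ R * sin φ₃}))) := by
    intro p hp
    simp only [hH, Set.mem_union, Set.mem_inter_iff, Set.mem_sdiff, Set.mem_ofPred_eq]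
    tauto
  have hfin : ∀ s ⊆ B, volume s ≠ ⊤ := fun s hs => measure_ne_top_of_subset hs hBf
  have i1 := measureReal_mono (μ := volume) hsub (hfin _ (by
    intro p; simp only [Set.mem_union, Set.mem_inter_iff, Set.mem_sdiff]; tauto))
  have i2 := i1.trans (measureReal_union_le _ _)
  have i3 := i2.trans (add_le_add_right (measureReal_union_le _ _) _)
  have i4 := i3.trans (add_le_add_right (add_le_add_right (measureReal_union_le _ _) _) _)
  rw [hd _ _ hu₁ h1 h1', hd _ _ hu₂ h2 h2', hd _ _ hu₃ h3 h3', hBv] at i4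
  refine le_trans ?_ (measure_mono (Set.inter_subset_right : B ∩ H ⊆ H))
  rw [ENNReal.ofReal_le_iff_le_toReal (hfin _ Set.inter_subset_left)]
  change _ ≤ volume.real (B ∩ H)
  have : R ^ 2 * (φ₁ + φ₂ + φ₃) = R ^ 2 * π := by rw [hsum]
  linarith

/-- The sharp area lower bound for the centrally symmetric comparison hexagon
whose center is at distance at least `1/4` from two pairs of opposite sides
and at least `h₀` from the remaining pair. -/
theorem hexagon_area_lower_bound
    (u₁ u₂ u₃ : EuclideanSpace ℝ (Fin 2))
    (hu₁ : ‖u₁‖ = 1) (hu₂ : ‖u₂‖ = 1) (hu₃ : ‖u₃‖ = 1)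
    (h12 : LinearIndependent ℝ ![u₁, u₂])
    (h13 : LinearIndependent ℝ ![u₁, u₃])
    (h23 : LinearIndependent ℝ ![u₂, u₃])
    (d₁ d₂ d₃ : ℝ) (hd₁ : d₁ ≥ 1/4) (hd₂ : d₂ ≥ h₀) (hd₃ : d₃ ≥ 1/4) :
    volume {p : EuclideanSpace ℝ (Fin 2) |
        |⟪p, u₁⟫| ≤ d₁ ∧ |⟪p, u₂⟫| ≤ d₂ ∧ |⟪p, u₃⟫| ≤ d₃} ≥
      ENNReal.ofReal (h₀ * Real.sqrt (1 - 4 * h₀ ^ 2)) := by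
  have hq : Real.sqrt 19 < 8 := by rw [Real.sqrt_lt' (by norm_num)]; norm_num
  have hq0 := Real.sqrt_nonneg 19
  have hpos : 0 < h₀ := Real.sqrt_pos.2 (by linarith)
  have hsq : h₀ ^ 2 = (8 - Real.sqrt 19) / 72 := Real.sq_sqrt (by linarith)
  generalize h₀ = h at *
  have h8 : 8 * h ^ 2 < 1 := by linarith
  set c := Real.sqrt (1 - 4 * h ^ 2) with hc
  have hc0 : 0 < c := Real.sqrt_pos.2 (by linarith)
  have hcc : c ^ 2 = 1 - 4 * h ^ 2 := Real.sq_sqrt (by linarith)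
  set θ := arcsin (2 * h) with hθ
  have hh1 : 2 * h < 1 := by nlinarith
  have hsin : sin θ = 2 * h := sin_arcsin (by linarith) hh1.le
  have hcos : cos θ = c := by
    rw [hθ, cos_arcsin, hc]; congr 1; ring
  have hθ0 : 0 < θ := arcsin_pos.2 (by linarith)
  have hθ1 : θ < π / 4 := by
    rw [hθ, arcsin_lt_iff_lt_sin' ⟨by linarith [pi_pos], by linarith [pi_pos]⟩, sin_pi_div_four]
    have := Real.sq_sqrt (show (0:ℝ) ≤ 2 by norm_num)
    have := Real.sqrt_nonneg 2
    nlinarith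
  have key := hex_bound u₁ u₂ u₃ hu₁ hu₂ hu₃ (1 / (4 * c)) (π / 2 - θ) (2 * θ) (π / 2 - θ)
    (by positivity) (by linarith) (by linarith) (by linarith) (by linarith) (by linarith)
    (by linarith) (by ring)
  rw [sin_pi_div_two_sub, cos_pi_div_two_sub, sin_two_mul, cos_two_mul', hsin, hcos] at key
  have a1 : 1 / (4 * c) * c = 1 / 4 := by field_simp
  have a2 : 1 / (4 * c) * (2 * (2 * h) * c) = h := by field_simp; norm_num
  rw [a1, a2] at key
  have a3 : 2 * (1 / (4 * c)) ^ 2 *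
      (c * (2 * h) + 2 * (2 * h) * c * (c ^ 2 - (2 * h) ^ 2) + c * (2 * h)) = h * c := by
    have : (2 * h) ^ 2 = 1 - c ^ 2 := by rw [hcc]; ring
    rw [this]
    field_simp
    ring
  rw [a3] at key
  refine key.trans (measure_mono ?_)
  rintro p ⟨q1, q2, q3⟩
  exact ⟨q1.trans hd₁, q2.trans hd₂, q3.trans hd₃⟩
end

section
/- Let p, q be nonzero vectors in the Euclidean plane ℝ², let α ∈ (0, π) be the angle between p and q, and let d > 0. Suppose that every point of the affine line through p and q has Euclidean norm at least d. Then the area of the triangle with vertices 0, p, q, namely (1/2)·|p₁q₂ − p₂q₁|, is at least d²·tan(α/2). -/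
open Real

/-- Among triangles with apex angle `α ∈ (0,π)` at the origin whose opposite
side lies on a line at distance at least `d` from the origin, the area is at
least `d² tan(α/2)`. -/
theorem triangle_area_lower_bound
    (p q : EuclideanSpace ℝ (Fin 2)) (hp : p ≠ 0) (hq : q ≠ 0)
    (α : ℝ) (hα : α = InnerProductGeometry.angle p q)
    (hα0 : 0 < α) (hαπ : α < Real.pi)
    (d : ℝ) (hd : 0 < d)
    (hline : ∀ t : ℝ, d ≤ ‖p + t • (q - p)‖) :
    (1/2) * |p 0 * q 1 - p 1 * q 0| ≥ d ^ 2 * Real.tan (α / 2) := by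
  have ha : 0 < ‖p‖ := norm_pos_iff.mpr hp
  have hb : 0 < ‖q‖ := norm_pos_iff.mpr hq
  have hin : Real.cos α * (‖p‖ * ‖q‖) = p 0 * q 0 + p 1 * q 1 := by
    rw [hα, InnerProductGeometry.cos_angle_mul_norm_mul_norm]
    simp [PiLp.inner_apply, Fin.sum_univ_two]
    ring
  have hpn : ‖p‖ ^ 2 = p 0 ^ 2 + p 1 ^ 2 := by
    simp [EuclideanSpace.norm_sq_eq, Fin.sum_univ_two]
  have hqn : ‖q‖ ^ 2 = q 0 ^ 2 + q 1 ^ 2 := by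
    simp [EuclideanSpace.norm_sq_eq, Fin.sum_univ_two]
  have hl : ∀ t : ℝ, d ^ 2 ≤ (p 0 + t * (q 0 - p 0)) ^ 2 + (p 1 + t * (q 1 - p 1)) ^ 2 := by
    intro t
    have h1 := pow_le_pow_left₀ hd.le (hline t) 2
    simpa [EuclideanSpace.norm_sq_eq, Fin.sum_univ_two] using h1
  clear hline hα
  have hs : 0 < Real.sin (α / 2) := Real.sin_pos_of_pos_of_lt_pi (by linarith) (by linarith)
  have hc : 0 < Real.cos (α / 2) := Real.cos_pos_of_mem_Ioo ⟨by linarith, by linarith⟩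
  have hcos : Real.cos α = 1 - 2 * Real.sin (α / 2) ^ 2 := by
    have := Real.cos_two_mul (α / 2)
    rw [mul_div_cancel₀ α two_ne_zero] at this
    nlinarith [Real.sin_sq_add_cos_sq (α / 2)]
  have hsc := Real.sin_sq_add_cos_sq (α / 2)
  rw [Real.tan_eq_sin_div_cos]
  generalize Real.sin (α / 2) = s at *
  generalize Real.cos (α / 2) = c at *
  rw [hcos] at hin
  generalize ‖p‖ = a at *
  generalize ‖q‖ = b at *
  generalize p 0 = x at *
  generalize p 1 = y at *
  generalize q 0 = z at *
  generalize q 1 = w at *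
  have hab : 0 < a * b := mul_pos ha hb
  have hC : |x * w - y * z| = 2 * (a * b) * s * c := by
    rw [← abs_of_pos (show 0 < 2 * (a * b) * s * c by positivity), ← sq_eq_sq_iff_abs_eq_abs]
    have h1 : (x * w - y * z) ^ 2 = a ^ 2 * b ^ 2 - (x * z + y * w) ^ 2 := by
      rw [hpn, hqn]; ring
    have hc2 : c ^ 2 = 1 - s ^ 2 := by linarith
    rw [h1, ← hin, mul_pow _ c, hc2]; ring
  have hN : 4 * (a * b) * s ^ 2 ≤ (z - x) ^ 2 + (w - y) ^ 2 := by
    nlinarith [sq_nonneg (a - b)]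
  have hNpos : 0 < (z - x) ^ 2 + (w - y) ^ 2 := lt_of_lt_of_le (by positivity) hN
  have hd2 : d ^ 2 * ((z - x) ^ 2 + (w - y) ^ 2) ≤ (x * w - y * z) ^ 2 := by
    have h1 := hl (-(x * (z - x) + y * (w - y)) / ((z - x) ^ 2 + (w - y) ^ 2))
    rw [← le_div_iff₀ hNpos]
    refine h1.trans (le_of_eq ?_)
    field_simp
    ring
  rw [← sq_abs (x * w - y * z), hC] at hd2
  rw [hC, ge_iff_le, ← mul_div_assoc, div_le_iff₀ hc]
  have h3 : d ^ 2 * (4 * (a * b) * s ^ 2) ≤ (2 * (a * b) * s * c) ^ 2 :=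
    (mul_le_mul_of_nonneg_left hN (by positivity)).trans hd2
  have hk : 0 < 4 * (a * b) * s := by positivity
  refine le_of_mul_le_mul_left ?_ hk
  nlinarith [h3]
end

section
/- For every real h with 0 < h < 1/2 and all α₁, α₂, α₃ ∈ (0, π) with α₁ + α₂ + α₃ = π, one has (1/8)·tan(α₁/2) + 2h²·tan(α₂/2) + (1/8)·tan(α₃/2) ≥ h·√(1 − 4h²). -/
open Real

/-- The analytic core of the comparison-hexagon area bound. -/
theorem hexagon_analytic_core (h : ℝ) (hh0 : 0 < h) (hh : h < 1/2)
    (α₁ α₂ α₃ : ℝ)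
    (h₁ : α₁ ∈ Set.Ioo 0 Real.pi) (h₂ : α₂ ∈ Set.Ioo 0 Real.pi)
    (h₃ : α₃ ∈ Set.Ioo 0 Real.pi) (hsum : α₁ + α₂ + α₃ = Real.pi) :
    (1/8) * Real.tan (α₁ / 2) + 2 * h ^ 2 * Real.tan (α₂ / 2)
      + (1/8) * Real.tan (α₃ / 2) ≥ h * Real.sqrt (1 - 4 * h ^ 2) := by
  obtain ⟨a1, b1⟩ := h₁
  obtain ⟨a2, b2⟩ := h₂
  obtain ⟨a3, b3⟩ := h₃
  have hx : 0 < tan (α₁ / 2) := tan_pos_of_pos_of_lt_pi_div_two (by linarith) (by linarith)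
  have hz : 0 < tan (α₃ / 2) := tan_pos_of_pos_of_lt_pi_div_two (by linarith) (by linarith)
  have c1 : 0 < cos (α₁ / 2) := cos_pos_of_mem_Ioo ⟨by linarith, by linarith⟩
  have c3 : 0 < cos (α₃ / 2) := cos_pos_of_mem_Ioo ⟨by linarith, by linarith⟩
  have s13 : 0 < sin (α₁ / 2 + α₃ / 2) := sin_pos_of_pos_of_lt_pi (by linarith) (by linarith)
  have key : tan (α₂ / 2) * (tan (α₁ / 2) + tan (α₃ / 2))
      = 1 - tan (α₁ / 2) * tan (α₃ / 2) := by
    have e : α₂ / 2 = π / 2 - (α₁ / 2 + α₃ / 2) := by linarith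
    rw [e, tan_eq_sin_div_cos (π / 2 - _), sin_pi_div_two_sub, cos_pi_div_two_sub,
      tan_eq_sin_div_cos, tan_eq_sin_div_cos, cos_add]
    rw [sin_add] at s13 ⊢
    have := s13.ne'
    rw [div_mul_eq_mul_div, div_eq_iff this]
    field_simp
  have hw : sqrt (1 - 4 * h ^ 2) ^ 2 = 1 - 4 * h ^ 2 := sq_sqrt (by nlinarith)
  generalize sqrt (1 - 4 * h ^ 2) = w at *
  generalize tan (α₁ / 2) = x at *
  generalize tan (α₂ / 2) = y at *
  generalize tan (α₃ / 2) = z at *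
  have hs : 0 < x + z := by linarith
  have main : 0 ≤ ((1/8) * x + 2 * h ^ 2 * y + (1/8) * z - h * w) * (x + z) := by
    have : ((1/8) * x + 2 * h ^ 2 * y + (1/8) * z - h * w) * (x + z)
        = ((x + z) * w - 4 * h) ^ 2 / 8 + h ^ 2 * (x - z) ^ 2 / 2 := by
      linear_combination 2 * h ^ 2 * key - (x + z) ^ 2 / 8 * hw
    rw [this]; positivity
  have := nonneg_of_mul_nonneg_left main hs
  linarith
end

section
/- Let h₀ = √((8−√19)/72) and θ₀ = arctan √((8−√19)/2). Then 0 < θ₀ < π/3, and the pair (h₀, θ₀) satisfies the system 2h₀ = sin(θ₀/2) and 6h₀ = tan θ₀; moreover tan(θ₀/2) = 2h₀/√(1 − 4h₀²). -/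
open Real

/-- The parameters `h₀ = √((8−√19)/72)` and `θ₀ = arctan √((8−√19)/2)` of the
extremal nonpositively curved Dyck's surface satisfy the defining system
`2h₀ = sin(θ₀/2)`, `6h₀ = tan θ₀`, and moreover `tan(θ₀/2) = 2h₀/√(1−4h₀²)`,
with `0 < θ₀ < π/3`. -/
theorem extremal_parameters :
    let h₀ : ℝ := Real.sqrt ((8 - Real.sqrt 19) / 72)
    let θ₀ : ℝ := Real.arctan (Real.sqrt ((8 - Real.sqrt 19) / 2))
    0 < θ₀ ∧ θ₀ < Real.pi / 3 ∧
      2 * h₀ = Real.sin (θ₀ / 2) ∧ 6 * h₀ = Real.tan θ₀ ∧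
      Real.tan (θ₀ / 2) = 2 * h₀ / Real.sqrt (1 - 4 * h₀ ^ 2) := by
  intro h₀ θ₀
  have hs2 : Real.sqrt 19 ^ 2 = 19 := Real.sq_sqrt (by norm_num)
  have hs0 : 0 ≤ Real.sqrt 19 := Real.sqrt_nonneg _
  have hs4 : 4 < Real.sqrt 19 := by nlinarith
  have hs5 : Real.sqrt 19 < 5 := by nlinarith
  set s := Real.sqrt 19 with hs
  have hx2 : Real.sqrt ((8 - s) / 2) ^ 2 = (8 - s) / 2 := Real.sq_sqrt (by linarith)
  have hxpos : 0 < Real.sqrt ((8 - s) / 2) := Real.sqrt_pos.mpr (by linarith)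
  have hh2 : h₀ ^ 2 = (8 - s) / 72 := Real.sq_sqrt (by linarith)
  have hhpos : 0 < h₀ := Real.sqrt_pos.mpr (by linarith)
  have htan : Real.tan θ₀ = Real.sqrt ((8 - s) / 2) := Real.tan_arctan _
  have hpos : 0 < θ₀ := Real.arctan_pos.mpr hxpos
  have hlt : θ₀ < Real.pi / 3 := by
    have h3 : Real.arctan (Real.sqrt 3) = Real.pi / 3 := by
      rw [← Real.tan_pi_div_three]
      exact Real.arctan_tan (by linarith [Real.pi_pos]) (by linarith [Real.pi_pos])
    rw [← h3]
    exact Real.arctan_strictMono (Real.sqrt_lt_sqrt (by linarith) (by linarith))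
  have hcos : Real.cos θ₀ = (1 + s) / 9 := by
    have h1 : Real.cos θ₀ ^ 2 = 1 / (1 + Real.sqrt ((8 - s) / 2) ^ 2) := Real.cos_sq_arctan _
    have h0 : 0 < Real.cos θ₀ := Real.cos_arctan_pos _
    rw [hx2] at h1
    have h2 : Real.cos θ₀ ^ 2 = ((1 + s) / 9) ^ 2 := by
      rw [h1, div_eq_iff (by linarith)]
      nlinarith
    exact (pow_left_inj₀ h0.le (by linarith) two_ne_zero).mp h2
  have hsinpos : 0 < Real.sin (θ₀ / 2) :=
    Real.sin_pos_of_pos_of_lt_pi (by linarith) (by linarith [Real.pi_pos])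
  have hcospos : 0 < Real.cos (θ₀ / 2) :=
    Real.cos_pos_of_mem_Ioo ⟨by linarith [Real.pi_pos], by linarith [Real.pi_pos]⟩
  have hsin : 2 * h₀ = Real.sin (θ₀ / 2) := by
    have h1 := Real.sin_sq_eq_half_sub (θ₀ / 2)
    rw [mul_div_cancel₀ _ (two_ne_zero' ℝ), hcos] at h1
    refine (pow_left_inj₀ (by linarith) hsinpos.le two_ne_zero).mp ?_
    rw [h1, mul_pow, hh2]
    ring
  refine ⟨hpos, hlt, hsin, ?_, ?_⟩
  · rw [htan]
    refine (pow_left_inj₀ (by linarith) hxpos.le two_ne_zero).mp ?_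
    rw [hx2, mul_pow, hh2]
    ring
  · have h1 : 1 - 4 * h₀ ^ 2 = Real.cos (θ₀ / 2) ^ 2 := by
      rw [Real.cos_sq', ← hsin]
      ring
    rw [h1, Real.sqrt_sq hcospos.le, hsin, Real.tan_eq_sin_div_cos]
end

section
/- For every real h with 0 < h < 1/2, one has 1 − 2h + 3h·√(1 − 4h²) ≤ 1 + (1/12)·√(169 − 38√19), with equality if and only if h = √((8−√19)/72). -/
open Real

/-- The area lower bound `1 − 2h + 3h√(1−4h²)` is maximized over `h ∈ (0,1/2)`
exactly at `h = √((8−√19)/72)`, with maximum value `1 + (1/12)√(169−38√19)`. -/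
theorem area_bound_optimization (h : ℝ) (hh0 : 0 < h) (hh : h < 1/2) :
    1 - 2 * h + 3 * h * Real.sqrt (1 - 4 * h ^ 2)
        ≤ 1 + (1/12) * Real.sqrt (169 - 38 * Real.sqrt 19) ∧
      (1 - 2 * h + 3 * h * Real.sqrt (1 - 4 * h ^ 2)
          = 1 + (1/12) * Real.sqrt (169 - 38 * Real.sqrt 19) ↔
        h = Real.sqrt ((8 - Real.sqrt 19) / 72)) := by
  obtain ⟨s, hs⟩ : ∃ s, s = Real.sqrt 19 := ⟨_, rfl⟩
  have hs2 : s ^ 2 = 19 := by rw [hs]; exact Real.sq_sqrt (by norm_num)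
  have hs0 : 0 ≤ s := by rw [hs]; exact Real.sqrt_nonneg _
  rw [← hs]
  have hs4 : 4.35 < s := by nlinarith
  have hs5 : s < 4.36 := by nlinarith
  obtain ⟨r, hr⟩ : ∃ r, r = Real.sqrt (169 - 38 * s) := ⟨_, rfl⟩
  have hr2 : r ^ 2 = 169 - 38 * s := by rw [hr]; exact Real.sq_sqrt (by linarith)
  have hr0 : 0 < r := by rw [hr]; exact Real.sqrt_pos.mpr (by linarith)
  rw [← hr]
  obtain ⟨y, hy⟩ : ∃ y, y = Real.sqrt (1 - 4 * h ^ 2) := ⟨_, rfl⟩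
  have hy2 : y ^ 2 = 1 - 4 * h ^ 2 := by rw [hy]; exact Real.sq_sqrt (by nlinarith)
  have hy0 : 0 ≤ y := by rw [hy]; exact Real.sqrt_nonneg _
  rw [← hy]
  have hh2 : h ^ 2 = (1 - y ^ 2) / 4 := by linarith
  have key : (r / 12) ^ 2 - (h * (3 * y - 2)) ^ 2
      = (y - (1 + s) / 6) ^ 2 * (9 * y ^ 2 + (3 * s - 9) * y + (6 - 5 / 2 * s)) / 4 := by
    rw [mul_pow, hh2, div_pow, hr2]
    have h3 : s ^ 3 = 19 * s := by rw [pow_succ, hs2]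
    ring_nf
    simp only [h3, hs2]
    ring
  have hc : h = Real.sqrt ((8 - s) / 72) ↔ y = (1 + s) / 6 := by
    have e : h = Real.sqrt ((8 - s) / 72) ↔ h ^ 2 = (8 - s) / 72 := by
      rw [eq_comm, Real.sqrt_eq_iff_eq_sq (by linarith) hh0.le, eq_comm]
    rw [e]
    constructor
    · intro H
      have : y ^ 2 = ((1 + s) / 6) ^ 2 := by nlinarith
      exact (pow_left_inj₀ hy0 (by linarith) two_ne_zero).mp this
    · intro H
      rw [hh2, H]
      nlinarith
  rw [hc]
  have ef : 1 - 2 * h + 3 * h * y = 1 + h * (3 * y - 2) := by ring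
  rw [ef]
  by_cases hy3 : y ≤ 2 / 3
  · have : h * (3 * y - 2) ≤ 0 := mul_nonpos_of_nonneg_of_nonpos hh0.le (by linarith)
    refine ⟨by linarith, fun H => by linarith, fun H => by linarith⟩
  · push Not at hy3
    have hq : 0 < 9 * y ^ 2 + (3 * s - 9) * y + (6 - 5 / 2 * s) := by nlinarith
    have hf : 0 < h * (3 * y - 2) := mul_pos hh0 (by linarith)
    refine ⟨?_, ?_, ?_⟩
    · have h1 : (h * (3 * y - 2)) ^ 2 ≤ (r / 12) ^ 2 := by
        have : 0 ≤ (r / 12) ^ 2 - (h * (3 * y - 2)) ^ 2 := by rw [key]; positivity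
        linarith
      have := (pow_le_pow_iff_left₀ hf.le (by positivity) two_ne_zero).mp h1
      linarith
    · intro H
      have h1 : h * (3 * y - 2) = r / 12 := by linarith
      rw [h1, sub_self] at key
      have h2 : (y - (1 + s) / 6) ^ 2 * (9 * y ^ 2 + (3 * s - 9) * y + (6 - 5 / 2 * s)) = 0 := by
        linarith
      rcases mul_eq_zero.mp h2 with h3 | h3
      · have := pow_eq_zero_iff two_ne_zero |>.mp h3
        linarith
      · exact absurd h3 hq.ne'
    · intro H
      have h1 : (h * (3 * y - 2)) ^ 2 = (r / 12) ^ 2 := by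
        have h0 : y - (1 + s) / 6 = 0 := by linarith
        rw [h0] at key
        linarith
      have := (pow_left_inj₀ hf.le (by positivity) two_ne_zero).mp h1
      linarith
end

section
/- Let K ⊆ ℝ² be a convex set that is symmetric about the origin (K = −K), let p, q ∈ K with p ≠ q, and let h, x > 0. Suppose ‖p − q‖ ≥ x and every point of the affine line through p and q has Euclidean norm at least h. Then the two-dimensional Lebesgue measure of K is at least 2hx. -/
open Real MeasureTheory

/-- A centrally symmetric convex set of the plane containing two points `p ≠ q`
with `‖p − q‖ ≥ x`, lying on an affine line at distance at least `h` from the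
origin, has area at least `2hx`. -/
theorem symmetric_convex_area_lower_bound
    (K : Set (EuclideanSpace ℝ (Fin 2))) (hK : Convex ℝ K) (hsym : K = -K)
    (p q : EuclideanSpace ℝ (Fin 2)) (hp : p ∈ K) (hq : q ∈ K) (hpq : p ≠ q)
    (h x : ℝ) (hh : 0 < h) (hx : 0 < x)
    (hlen : ‖p - q‖ ≥ x)
    (hline : ∀ t : ℝ, ‖p + t • (q - p)‖ ≥ h) :
    volume K ≥ ENNReal.ofReal (2 * h * x) := by
  set D : ℝ := p 0 * q 1 - p 1 * q 0 with hD
  have hL : x ^ 2 ≤ (q 0 - p 0) ^ 2 + (q 1 - p 1) ^ 2 := by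
    have h1 : x ^ 2 ≤ ‖p - q‖ ^ 2 := by gcongr
    rw [EuclideanSpace.real_norm_sq_eq] at h1
    simp [Fin.sum_univ_two] at h1
    nlinarith
  set L : ℝ := (q 0 - p 0) ^ 2 + (q 1 - p 1) ^ 2 with hLdef
  have hLpos : 0 < L := lt_of_lt_of_le (by positivity) hL
  have hd : h ^ 2 * L ≤ D ^ 2 := by
    set t : ℝ := -(p 0 * (q 0 - p 0) + p 1 * (q 1 - p 1)) / L with ht
    have htL : t * L = -(p 0 * (q 0 - p 0) + p 1 * (q 1 - p 1)) := by
      rw [ht]; field_simp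
    have h1 : h ^ 2 ≤ ‖p + t • (q - p)‖ ^ 2 := by
      have := hline t
      gcongr
    rw [EuclideanSpace.real_norm_sq_eq] at h1
    simp [Fin.sum_univ_two] at h1
    have h2 : ((p 0 + t * (q 0 - p 0)) ^ 2 + (p 1 + t * (q 1 - p 1)) ^ 2) * L = D ^ 2 := by
      have e : ((p 0 + t * (q 0 - p 0)) ^ 2 + (p 1 + t * (q 1 - p 1)) ^ 2) * L
          = (p 0 ^ 2 + p 1 ^ 2) * L + 2 * (t * L) * (p 0 * (q 0 - p 0) + p 1 * (q 1 - p 1))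
            + (t * L) ^ 2 := by
        rw [hLdef]; ring
      rw [e, htL, hLdef, hD]; ring
    rw [← h2]
    gcongr
  have hDabs : h * x ≤ |D| := by
    rw [← abs_of_pos (mul_pos hh hx)]
    apply sq_le_sq.1
    calc (h * x) ^ 2 = h ^ 2 * x ^ 2 := by ring
      _ ≤ h ^ 2 * L := by gcongr
      _ ≤ D ^ 2 := hd
  have hsub : parallelepiped ![p + q, p - q] ⊆ (fun z => -p + z) ⁻¹' K := by
    intro z hz
    rw [mem_parallelepiped_iff] at hz
    obtain ⟨t, ht, rfl⟩ := hz
    have a0 := ht.1 0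
    have a1 := ht.1 1
    have b0 := ht.2 0
    have b1 := ht.2 1
    simp only [Pi.zero_apply, Pi.one_apply] at a0 a1 b0 b1
    have hnp : -p ∈ K := by rw [hsym]; simpa using hp
    have hnq : -q ∈ K := by rw [hsym]; simpa using hq
    have c1 := hK hnp hq (sub_nonneg.2 b0) a0 (by ring)
    have c2 := hK hnq hp (sub_nonneg.2 b0) a0 (by ring)
    have c3 := hK c1 c2 (sub_nonneg.2 b1) a1 (by ring)
    simp only [Set.mem_preimage, Fin.sum_univ_two, Matrix.cons_val_zero, Matrix.cons_val_one]
    convert c3 using 1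
    module
  have hvol : volume (parallelepiped ![p + q, p - q]) = ENNReal.ofReal (2 * |D|) := by
    have := Measure.addHaar_parallelepiped (EuclideanSpace.basisFun (Fin 2) ℝ).toBasis ![p + q, p - q]
    rw [OrthonormalBasis.addHaar_eq_volume] at this
    rw [this, Module.Basis.det_apply, Matrix.det_fin_two]
    congr 1
    rw [show (2:ℝ) * |D| = |(-2) * D| by rw [abs_mul]; norm_num]
    congr 1
    simp only [Module.Basis.toMatrix_apply, OrthonormalBasis.coe_toBasis_repr_apply,
      EuclideanSpace.basisFun_repr, Matrix.cons_val_zero, Matrix.cons_val_one, PiLp.add_apply,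
      PiLp.sub_apply]
    rw [hD]; ring
  calc ENNReal.ofReal (2 * h * x) ≤ ENNReal.ofReal (2 * |D|) :=
        ENNReal.ofReal_le_ofReal (by linarith)
    _ = volume (parallelepiped ![p + q, p - q]) := hvol.symm
    _ ≤ volume ((fun z => -p + z) ⁻¹' K) := measure_mono hsub
    _ = volume K := measure_preimage_add _ _ _
end

section
/- Let a < b be real numbers, let h : ℝ → ℝ be continuous and strictly positive on [a,b], and let H : ℝ → ℝ be differentiable on [a,b] with H′(s) = 1/h(s) for all s ∈ [a,b]. Let f : ℝ → ℝ be continuously differentiable on [a,b] with f(a) = 0 and f(b) = 1. Then H(b) > H(a) and ∫ₐᵇ f′(s)²·h(s) ds ≥ 1/(H(b) − H(a)). -/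
open Real intervalIntegral

/-- The one-dimensional core of Muetzel's capacity lemma: if `h > 0` is
continuous on `[a,b]`, `H` is a primitive of `1/h` and `f` is continuously
differentiable with `f(a) = 0`, `f(b) = 1`, then `H(b) > H(a)` and the weighted
Dirichlet energy `∫ₐᵇ f′² h` is at least `1/(H(b) − H(a))`. -/
theorem muetzel_one_dimensional
    (a b : ℝ) (hab : a < b) (h H f f' : ℝ → ℝ)
    (hh_cont : ContinuousOn h (Set.Icc a b))
    (hh_pos : ∀ s ∈ Set.Icc a b, 0 < h s)
    (hH : ∀ s ∈ Set.Icc a b, HasDerivAt H (1 / h s) s)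
    (hf : ∀ s ∈ Set.Icc a b, HasDerivAt f (f' s) s)
    (hf' : ContinuousOn f' (Set.Icc a b))
    (hfa : f a = 0) (hfb : f b = 1) :
    H a < H b ∧ 1 / (H b - H a) ≤ ∫ s in a..b, (f' s) ^ 2 * h s := by
  have hlt : H a < H b := by
    have hmono : StrictMonoOn H (Set.Icc a b) := by
      apply strictMonoOn_of_deriv_pos (convex_Icc a b)
      · exact fun s hs => (hH s hs).continuousAt.continuousWithinAt
      · intro s hs
        have hs' := interior_subset hs
        rw [(hH s hs').deriv]
        exact one_div_pos.mpr (hh_pos s hs')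
    exact hmono (Set.left_mem_Icc.mpr hab.le) (Set.right_mem_Icc.mpr hab.le) hab
  refine ⟨hlt, ?_⟩
  have hpos : 0 < H b - H a := sub_pos.mpr hlt
  obtain ⟨c, hc⟩ : ∃ c, c = 1 / (H b - H a) := ⟨_, rfl⟩
  have hcm : c * (H b - H a) = 1 := by rw [hc]; field_simp
  have hg : ContinuousOn (fun s => 2 * c * f' s - c ^ 2 * (1 / h s)) (Set.Icc a b) :=
    (continuousOn_const.mul hf').sub
      (continuousOn_const.mul (continuousOn_const.div hh_cont fun s hs => (hh_pos s hs).ne'))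
  have hgi := hg.intervalIntegrable_of_Icc (μ := MeasureTheory.volume) hab.le
  have hFTC : ∫ s in a..b, (2 * c * f' s - c ^ 2 * (1 / h s)) = c := by
    rw [integral_eq_sub_of_hasDerivAt (f := fun s => 2 * c * f s - c ^ 2 * H s) _ hgi]
    · rw [hfa, hfb]
      linear_combination -c * hcm
    · intro s hs
      rw [Set.uIcc_of_le hab.le] at hs
      exact ((hf s hs).const_mul _).sub ((hH s hs).const_mul _)
  rw [← hc]
  calc c = ∫ s in a..b, (2 * c * f' s - c ^ 2 * (1 / h s)) := hFTC.symm
    _ ≤ _ := by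
      apply integral_mono_on hab.le hgi
      · exact ((hf'.pow 2).mul hh_cont).intervalIntegrable_of_Icc hab.le
      · intro s hs
        have hp := hh_pos s hs
        have key : (f' s) ^ 2 * h s - (2 * c * f' s - c ^ 2 * (1 / h s))
            = (f' s * h s - c) ^ 2 / h s := by
          field_simp
          ring
        have : 0 ≤ (f' s * h s - c) ^ 2 / h s := by positivity
        linarith
end

section
/- Let ℓ > 0, let a, b : ℝ → ℝ be continuous functions with a(t) < b(t) for all t ∈ [0,ℓ], and let u : ℝ² → ℝ be continuously differentiable with u(t, a(t)) = 0 and u(t, b(t)) = 1 for all t ∈ [0,ℓ]. Let H(s) = 2·arctan(exp s). Then ∫₀^ℓ ( ∫_{a(t)}^{b(t)} (∂u/∂s)(t,s)²·cosh(s) ds ) dt ≥ ∫₀^ℓ 1/(H(b(t)) − H(a(t))) dt. -/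
open Real intervalIntegral

/-- Muetzel's lower bound for the capacity of a hyperbolic collar in Fermi
coordinates: the Dirichlet-type energy of a `C¹` function `u` which is `0` on
the curve `s = a(t)` and `1` on the curve `s = b(t)` is bounded below using
the primitive `H(s) = 2 arctan(eˢ)` of `1/cosh(s)`. -/
theorem muetzel_collar_capacity
    (ℓ : ℝ) (hℓ : 0 < ℓ)
    (a b : ℝ → ℝ) (ha : Continuous a) (hb : Continuous b)
    (hab : ∀ t ∈ Set.Icc (0:ℝ) ℓ, a t < b t)
    (u : ℝ × ℝ → ℝ) (hu : ContDiff ℝ 1 u)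
    (hu0 : ∀ t ∈ Set.Icc (0:ℝ) ℓ, u (t, a t) = 0)
    (hu1 : ∀ t ∈ Set.Icc (0:ℝ) ℓ, u (t, b t) = 1) :
    (∫ t in (0:ℝ)..ℓ, ∫ s in a t..b t,
        (deriv (fun s' => u (t, s')) s) ^ 2 * Real.cosh s) ≥
      ∫ t in (0:ℝ)..ℓ, 1 /
        (2 * Real.arctan (Real.exp (b t)) - 2 * Real.arctan (Real.exp (a t))) := by
  have hdiff : Differentiable ℝ u := hu.differentiable (by norm_num)
  have hd : ∀ t s : ℝ, HasDerivAt (fun s' => u (t, s')) (fderiv ℝ u (t, s) (0, 1)) s := by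
    intro t s
    have h1 : HasDerivAt (fun s' : ℝ => ((t, s') : ℝ × ℝ)) (0, 1) s :=
      (hasDerivAt_const s t).prodMk (hasDerivAt_id s)
    exact (hdiff (t, s)).hasFDerivAt.comp_hasDerivAt s h1
  have hc : Continuous (fun p : ℝ × ℝ => fderiv ℝ u p (0, 1)) :=
    (hu.continuous_fderiv (by norm_num)).clm_apply continuous_const
  have hH : ∀ s : ℝ, HasDerivAt (fun s => 2 * Real.arctan (Real.exp s)) (1 / Real.cosh s) s := by
    intro s
    have h := ((Real.hasDerivAt_exp s).arctan).const_mul 2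
    have e : 1 / Real.cosh s = 2 * (1 / (1 + Real.exp s ^ 2) * Real.exp s) := by
      rw [Real.cosh_eq, Real.exp_neg]
      have := Real.exp_pos s
      field_simp
      ring
    rw [e]
    exact h
  have hmono : ∀ t ∈ Set.Icc (0:ℝ) ℓ,
      0 < 2 * Real.arctan (Real.exp (b t)) - 2 * Real.arctan (Real.exp (a t)) := by
    intro t ht
    have := Real.arctan_strictMono (Real.exp_lt_exp.2 (hab t ht))
    linarith
  have hg : Continuous (fun p : ℝ × ℝ => (fderiv ℝ u p (0, 1)) ^ 2 * Real.cosh p.2) :=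
    (hc.pow 2).mul (Real.continuous_cosh.comp continuous_snd)
  have hgt : ∀ t : ℝ, Continuous (fun s : ℝ => (fderiv ℝ u (t, s) (0, 1)) ^ 2 * Real.cosh s) :=
    fun t => hg.comp (Continuous.prodMk_right t)
  simp only [fun t s => (hd t s).deriv]
  have hF : Continuous (fun t : ℝ => ∫ s in a t..b t,
      (fderiv ℝ u (t, s) (0, 1)) ^ 2 * Real.cosh s) := by
    have h1 := continuous_parametric_intervalIntegral_of_continuous (μ := MeasureTheory.volume)
      (a₀ := 0) (f := fun t s : ℝ => (fderiv ℝ u (t, s) (0, 1)) ^ 2 * Real.cosh s) hg hb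
    have h2 := continuous_parametric_intervalIntegral_of_continuous (μ := MeasureTheory.volume)
      (a₀ := 0) (f := fun t s : ℝ => (fderiv ℝ u (t, s) (0, 1)) ^ 2 * Real.cosh s) hg ha
    refine (h1.sub h2).congr fun t => ?_
    exact integral_interval_sub_left ((hgt t).intervalIntegrable _ _)
      ((hgt t).intervalIntegrable _ _)
  refine integral_mono_on hℓ.le ?_ (hF.intervalIntegrable _ _) ?_
  · apply ContinuousOn.intervalIntegrable
    rw [Set.uIcc_of_le hℓ.le]
    refine ContinuousOn.div continuousOn_const ?_ fun t ht => (hmono t ht).ne'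
    apply Continuous.continuousOn
    exact (continuous_const.mul (Real.continuous_arctan.comp (Real.continuous_exp.comp hb))).sub
      (continuous_const.mul (Real.continuous_arctan.comp (Real.continuous_exp.comp ha)))
  · intro t ht
    have hD := hmono t ht
    set D := 2 * Real.arctan (Real.exp (b t)) - 2 * Real.arctan (Real.exp (a t)) with hDdef
    have hct : Continuous (fun s : ℝ => 2 * (1 / D) * fderiv ℝ u (t, s) (0, 1)
        - (1 / D) ^ 2 * (1 / Real.cosh s)) := by
      refine (continuous_const.mul (hc.comp (Continuous.prodMk_right t))).sub
        (continuous_const.mul (continuous_const.div Real.continuous_cosh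
          fun s => (Real.cosh_pos s).ne'))
    have hint := integral_eq_sub_of_hasDerivAt (a := a t) (b := b t)
      (fun s _ => ((hd t s).const_mul (2 * (1 / D))).sub ((hH s).const_mul ((1 / D) ^ 2)))
      (hct.intervalIntegrable _ _)
    have heq : 1 / D = ∫ s in a t..b t, (2 * (1 / D) * fderiv ℝ u (t, s) (0, 1)
        - (1 / D) ^ 2 * (1 / Real.cosh s)) := by
      rw [hint]
      simp only [Pi.sub_apply, hu0 t ht, hu1 t ht]
      have h3 : (1 / D) ^ 2 * D = 1 / D := by field_simp
      rw [hDdef] at h3 ⊢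
      linear_combination h3
    rw [heq]
    refine integral_mono_on (hab t ht).le (hct.intervalIntegrable _ _)
      ((hgt t).intervalIntegrable _ _) fun s _ => ?_
    have hp := Real.cosh_pos s
    have key : fderiv ℝ u (t, s) (0, 1) ^ 2 * Real.cosh s
        - (2 * (1 / D) * fderiv ℝ u (t, s) (0, 1) - (1 / D) ^ 2 * (1 / Real.cosh s))
        = (fderiv ℝ u (t, s) (0, 1) * Real.cosh s - 1 / D) ^ 2 / Real.cosh s := by
      field_simp
      ring
    have : 0 ≤ (fderiv ℝ u (t, s) (0, 1) * Real.cosh s - 1 / D) ^ 2 / Real.cosh s := by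
      positivity
    linarith
end

section
/- Let ℓ = 2·arccosh((5+√17)/2), let a(t) = artanh(cosh(t)·tanh(ℓ/4)), and let H(s) = 2·arctan(exp s). Then (i) cosh(t)·tanh(ℓ/4) < 1 for every t ∈ [0, ℓ/12], so a(t) is well defined there; and (ii) 12·∫₀^{ℓ/12} 1/(H(a(t)) − H(−a(t))) dt ≥ 2.294. -/
open Real intervalIntegral

/-- `ℓ = 2 arccosh((5+√17)/2)`, where `arccosh x = log (x + √(x²−1))`:
the boundary length of the maximal hyperbolic one-holed torus. -/
noncomputable def ellExt : ℝ :=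
  2 * Real.log ((5 + Real.sqrt 17) / 2
    + Real.sqrt (((5 + Real.sqrt 17) / 2) ^ 2 - 1))

/-- The half-width `a(t) = artanh(cosh t · tanh(ℓ/4))` of the collar of the
extremal hyperbolic Dyck's surface in Fermi coordinates, where
`artanh x = (1/2) log((1+x)/(1−x))`. -/
noncomputable def collarHalfWidth (t : ℝ) : ℝ :=
  (1/2) * Real.log ((1 + Real.cosh t * Real.tanh (ellExt / 4)) /
    (1 - Real.cosh t * Real.tanh (ellExt / 4)))

/-- The primitive `H(s) = 2 arctan(eˢ)` of `1/cosh s`. -/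
noncomputable def Hcap (s : ℝ) : ℝ := 2 * Real.arctan (Real.exp s)

lemma sqrt17_bounds : (4.123105:ℝ) ≤ √17 ∧ √17 ≤ 4.123106 := by
  constructor
  · apply Real.le_sqrt_of_sq_le; norm_num
  · rw [Real.sqrt_le_left (by norm_num)]; norm_num

noncomputable def yExt : ℝ := (5 + √17) / 2 + √(((5 + √17) / 2) ^ 2 - 1)

lemma yExt_bounds : (9.0120:ℝ) ≤ yExt ∧ yExt ≤ 9.0124 := by
  obtain ⟨h1, h2⟩ := sqrt17_bounds
  unfold yExt
  have h3 : (4.45054:ℝ) ≤ √(((5 + √17) / 2) ^ 2 - 1) := by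
    apply Real.le_sqrt_of_sq_le; nlinarith
  have h4 : √(((5 + √17) / 2) ^ 2 - 1) ≤ 4.4508 := by
    rw [Real.sqrt_le_left (by norm_num)]; nlinarith
  constructor <;> linarith

lemma yExt_quad : yExt ^ 2 + 1 = (5 + √17) * yExt := by
  obtain ⟨h1, h2⟩ := sqrt17_bounds
  have h : (0:ℝ) ≤ ((5 + √17) / 2) ^ 2 - 1 := by nlinarith
  have := Real.sq_sqrt h
  unfold yExt
  nlinarith

lemma ellExt_eq : ellExt = 2 * Real.log yExt := rfl

lemma ell_bounds : (0.36642:ℝ) ≤ ellExt / 12 ∧ ellExt / 12 ≤ 0.36644 := by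
  obtain ⟨h1, h2⟩ := yExt_bounds
  have hy : 0 < yExt := by linarith
  have e1 : (6 * 0.36642 : ℝ) ≤ Real.log yExt := by
    rw [Real.le_log_iff_exp_le hy]
    refine le_trans ?_ h1
    have := Real.exp_bound' (x := 0.36642) (by norm_num) (by norm_num) (n := 7) (by norm_num)
    have e : Real.exp (6 * 0.36642) = Real.exp 0.36642 ^ 6 := by
      rw [← Real.exp_nat_mul]; norm_num
    rw [e]
    refine le_trans (pow_le_pow_left₀ (Real.exp_pos _).le this 6) ?_
    norm_num [Finset.sum_range_succ, Nat.factorial]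
  have e2 : Real.log yExt ≤ 6 * 0.36644 := by
    rw [Real.log_le_iff_le_exp hy]
    refine le_trans h2 ?_
    have := Real.sum_le_exp_of_nonneg (x := 0.36644) (by norm_num) 7
    have e : Real.exp (6 * 0.36644) = Real.exp 0.36644 ^ 6 := by
      rw [← Real.exp_nat_mul]; norm_num
    rw [e]
    refine le_trans ?_ (pow_le_pow_left₀ (Finset.sum_nonneg fun i _ => by positivity) this 6)
    norm_num [Finset.sum_range_succ, Nat.factorial]
  rw [ellExt_eq]
  constructor <;> linarith

lemma tanh_bounds : 0 < Real.tanh (ellExt / 4) ∧ (0.64:ℝ) ≤ Real.tanh (ellExt / 4) ^ 2 ∧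
    Real.tanh (ellExt / 4) ^ 2 ≤ 0.640389 := by
  obtain ⟨h1, h2⟩ := yExt_bounds
  obtain ⟨s1, s2⟩ := sqrt17_bounds
  have hy : 0 < yExt := by linarith
  have hq := yExt_quad
  have hT : Real.tanh (ellExt / 4) = (yExt - 1) / (yExt + 1) := by
    have hz : Real.exp (ellExt / 4) ^ 2 = yExt := by
      rw [← Real.exp_nat_mul, ellExt_eq, ← Real.exp_log hy]
      congr 1
      simp only [Real.exp_log hy]
      push_cast; ring
    have hp := Real.exp_pos (ellExt / 4)
    rw [Real.tanh_eq, Real.exp_neg, ← hz]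
    field_simp
  rw [hT]
  refine ⟨div_pos (by linarith) (by linarith), ?_, ?_⟩
  · rw [div_pow, le_div_iff₀ (by positivity)]
    nlinarith
  · rw [div_pow, div_le_iff₀ (by positivity)]
    nlinarith

lemma cosh_two_bound (t : ℝ) (h0 : 0 ≤ t) (h1 : t ≤ 0.36644) :
    Real.cosh (2 * t) ≤ 1 + 2 * t ^ 2 + 2 / 3 * (t ^ 2) ^ 2 + 0.1038 * (t ^ 2) ^ 3 := by
  have ha : |2 * t| ≤ 1 := by rw [abs_of_nonneg (by linarith)]; linarith
  have hb : |-(2 * t)| ≤ 1 := by rw [abs_neg]; exact ha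
  have A := (abs_le.1 (Real.exp_bound ha (n := 6) (by norm_num))).2
  have B := (abs_le.1 (Real.exp_bound hb (n := 6) (by norm_num))).2
  rw [abs_neg] at B
  rw [abs_of_nonneg (by linarith : 0 ≤ 2 * t)] at A B
  norm_num [Finset.sum_range_succ, Nat.factorial] at A B
  rw [Real.cosh_eq]
  have : 0 ≤ t ^ 6 := by positivity
  nlinarith

lemma sq_bound (t : ℝ) (h0 : 0 ≤ t) (h1 : t ≤ 0.36644) :
    2 * (Real.cosh t * Real.tanh (ellExt / 4)) ^ 2 - 1 ≤
      0.640389 * (2 + 2 * t ^ 2 + 2 / 3 * (t ^ 2) ^ 2 + 0.1038 * (t ^ 2) ^ 3) - 1 := by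
  obtain ⟨_, _, hT⟩ := tanh_bounds
  have hc := cosh_two_bound t h0 h1
  have e : 2 * Real.cosh t ^ 2 = Real.cosh (2 * t) + 1 := by
    rw [Real.cosh_two_mul, Real.sinh_sq]; ring
  have : 2 * (Real.cosh t * Real.tanh (ellExt / 4)) ^ 2 =
      Real.tanh (ellExt / 4) ^ 2 * (Real.cosh (2 * t) + 1) := by rw [← e]; ring
  rw [this]
  have h := mul_le_mul hT (add_le_add_left hc 1) (by positivity) (by norm_num)
  linarith

lemma x_bounds (t : ℝ) (h0 : 0 ≤ t) (h1 : t ≤ 0.36644) :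
    0 < Real.cosh t * Real.tanh (ellExt / 4) ∧ Real.cosh t * Real.tanh (ellExt / 4) < 1 ∧
    1 / 2 < (Real.cosh t * Real.tanh (ellExt / 4)) ^ 2 := by
  obtain ⟨hp, hT1, _⟩ := tanh_bounds
  have h := sq_bound t h0 h1
  have hc := Real.one_le_cosh t
  have hu : t ^ 2 ≤ 0.1343 := by nlinarith
  have hu0 : 0 ≤ t ^ 2 := sq_nonneg t
  have hu2 : (t ^ 2) ^ 2 ≤ 0.1343 ^ 2 := pow_le_pow_left₀ hu0 hu 2
  have hu3 : (t ^ 2) ^ 3 ≤ 0.1343 ^ 3 := pow_le_pow_left₀ hu0 hu 3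
  have hx : 0 < Real.cosh t * Real.tanh (ellExt / 4) := mul_pos (by linarith) hp
  refine ⟨hx, ?_, ?_⟩
  · norm_num at hu2 hu3 h
    nlinarith
  · rw [mul_pow]
    have : 1 ≤ Real.cosh t ^ 2 := by nlinarith
    nlinarith

lemma poly1 (u : ℝ) (h0 : 0 ≤ u) (h1 : u ≤ 0.1343) :
    0.640389 * (2 + 2 * u + 2 / 3 * u ^ 2 + 0.1038 * u ^ 3) - 1 ≤
    (0.28481 + 1.32445 * u + 0.90316 * u ^ 2) -
      (0.28481 + 1.32445 * u + 0.90316 * u ^ 2) ^ 3 / 6 := by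
  have h3 : 0 ≤ u ^ 3 := by positivity
  have h4 : u ^ 4 ≤ 0.1343 * u ^ 3 := by nlinarith
  have h5 : u ^ 5 ≤ 0.1343 ^ 2 * u ^ 3 := by nlinarith
  have h6 : u ^ 6 ≤ 0.1343 ^ 3 * u ^ 3 := by nlinarith
  norm_num at h5 h6
  nlinarith [mul_nonneg (sub_nonneg.2 h1) (sq_nonneg (u - 0.0336)),
    mul_nonneg h0 (sq_nonneg (u - 0.0336))]

lemma poly2 (u : ℝ) (h0 : 0 ≤ u) (h1 : u ≤ 0.1343) :
    (0.53889 - 0.38621 * u + 0.0442 * u ^ 2) *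
      (1.570797 + (0.28481 + 1.32445 * u + 0.90316 * u ^ 2)) ≤ 1 := by
  nlinarith [mul_nonneg h0 (sq_nonneg (u - 0.1)), mul_nonneg (sub_nonneg.2 h1) (sq_nonneg (u - 0.0336)), mul_nonneg (mul_nonneg h0 (sub_nonneg.2 h1)) (sq_nonneg u)]

lemma exp_width (x : ℝ) (h0 : 0 < x) (h1 : x < 1) :
    Real.exp ((1/2) * Real.log ((1 + x) / (1 - x))) ^ 2 = (1 + x) / (1 - x) := by
  rw [← Real.exp_nat_mul]
  have : (0:ℝ) < (1 + x) / (1 - x) := div_pos (by linarith) (by linarith)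
  rw [show ((2:ℕ):ℝ) * ((1/2) * Real.log ((1 + x) / (1 - x))) = Real.log ((1 + x) / (1 - x)) by
    push_cast; ring, Real.exp_log this]

/-- The denominator is `4 arctan (exp a) - π`. -/
lemma Hdiff (a : ℝ) : Hcap a - Hcap (-a) = 4 * Real.arctan (Real.exp a) - π := by
  unfold Hcap
  rw [Real.exp_neg, Real.arctan_inv_of_pos (Real.exp_pos a)]
  ring

lemma cos_four (a x : ℝ) (h1 : x < 1) (ha : Real.exp a ^ 2 = (1 + x) / (1 - x)) :
    Real.cos (4 * Real.arctan (Real.exp a)) = 2 * x ^ 2 - 1 := by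
  have h2 : Real.cos (2 * Real.arctan (Real.exp a)) = -x := by
    rw [Real.cos_two_mul, Real.cos_sq_arctan, ha]
    have : (1 - x) ≠ 0 := by linarith
    field_simp
    ring
  rw [show 4 * Real.arctan (Real.exp a) = 2 * (2 * Real.arctan (Real.exp a)) by ring,
    Real.cos_two_mul, h2]
  ring

lemma width_pos (t : ℝ) (h0 : 0 ≤ t) (h1 : t ≤ 0.36644) : 0 < collarHalfWidth t := by
  obtain ⟨a, b, _⟩ := x_bounds t h0 h1
  unfold collarHalfWidth
  apply mul_pos (by norm_num)
  apply Real.log_pos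
  rw [lt_div_iff₀ (by linarith)]
  linarith

lemma denom_pos (t : ℝ) (h0 : 0 ≤ t) (h1 : t ≤ 0.36644) :
    0 < Hcap (collarHalfWidth t) - Hcap (-(collarHalfWidth t)) := by
  rw [Hdiff]
  have h := width_pos t h0 h1
  have := Real.arctan_strictMono (Real.one_lt_exp_iff.2 h)
  rw [Real.arctan_one] at this
  linarith

lemma denom_le (t : ℝ) (h0 : 0 ≤ t) (h1 : t ≤ 0.36644) :
    Hcap (collarHalfWidth t) - Hcap (-(collarHalfWidth t)) ≤
      1.570797 + (0.28481 + 1.32445 * t ^ 2 + 0.90316 * (t ^ 2) ^ 2) := by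
  have hpos := denom_pos t h0 h1
  rw [Hdiff] at hpos ⊢
  obtain ⟨a, b, _⟩ := x_bounds t h0 h1
  have hs := sq_bound t h0 h1
  have hu0 : 0 ≤ t ^ 2 := sq_nonneg t
  have hu : t ^ 2 ≤ 0.1343 := by nlinarith
  have hp := poly1 (t ^ 2) hu0 hu
  have hc := cos_four (collarHalfWidth t) _ b (exp_width _ a b)
  set q : ℝ := 0.28481 + 1.32445 * t ^ 2 + 0.90316 * (t ^ 2) ^ 2 with hq
  have hq0 : 0 ≤ q := by positivity
  have hq1 : q ≤ 1 := by nlinarith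
  have hsin := Real.sin_ge_sub_cube hq0
  have hpi := Real.pi_lt_d6
  have hpi' := Real.pi_gt_d6
  have hlt := Real.arctan_lt_pi_div_two (Real.exp (collarHalfWidth t))
  by_contra hcon
  push Not at hcon
  have hlt2 : q < 4 * Real.arctan (Real.exp (collarHalfWidth t)) - π - π / 2 := by linarith
  have := Real.sin_lt_sin_of_lt_of_le_pi_div_two (by linarith) (by linarith) hlt2
  have e : Real.sin (4 * Real.arctan (Real.exp (collarHalfWidth t)) - π - π / 2) =
      Real.cos (4 * Real.arctan (Real.exp (collarHalfWidth t))) := by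
    rw [Real.sin_sub_pi_div_two, Real.cos_sub_pi, neg_neg]
  rw [e, hc] at this
  linarith

lemma integrand_ge (t : ℝ) (h0 : 0 ≤ t) (h1 : t ≤ 0.36644) :
    0.53889 - 0.38621 * t ^ 2 + 0.0442 * t ^ 4 ≤
      1 / (Hcap (collarHalfWidth t) - Hcap (-(collarHalfWidth t))) := by
  have hpos := denom_pos t h0 h1
  have hle := denom_le t h0 h1
  have hu0 : 0 ≤ t ^ 2 := sq_nonneg t
  have hu : t ^ 2 ≤ 0.1343 := by nlinarith
  have hp := poly2 (t ^ 2) hu0 hu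
  rw [le_div_iff₀ hpos]
  have h4 : t ^ 4 = (t ^ 2) ^ 2 := by ring
  rw [h4]
  refine le_trans (mul_le_mul_of_nonneg_left hle ?_) hp
  nlinarith

lemma integrand_cont : ContinuousOn
    (fun t => 1 / (Hcap (collarHalfWidth t) - Hcap (-(collarHalfWidth t))))
    (Set.Icc 0 (ellExt / 12)) := by
  have hb := ell_bounds
  have hw : ContinuousOn collarHalfWidth (Set.Icc 0 (ellExt / 12)) := by
    unfold collarHalfWidth
    refine continuousOn_const.mul (ContinuousOn.log (ContinuousOn.div ?_ ?_ ?_) ?_)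
    · exact (continuous_const.add (Real.continuous_cosh.mul continuous_const)).continuousOn
    · exact (continuous_const.sub (Real.continuous_cosh.mul continuous_const)).continuousOn
    · intro t ht
      have := x_bounds t ht.1 (ht.2.trans hb.2)
      linarith [this.2.1]
    · intro t ht
      have := x_bounds t ht.1 (ht.2.trans hb.2)
      exact (div_pos (by linarith [this.1]) (by linarith [this.2.1])).ne'
  have hH : Continuous Hcap :=
    continuous_const.mul (Real.continuous_arctan.comp Real.continuous_exp)
  refine continuousOn_const.div ((hH.comp_continuousOn hw).sub (hH.comp_continuousOn hw.neg)) ?_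
  intro t ht
  exact (denom_pos t ht.1 (ht.2.trans hb.2)).ne'

lemma poly_integral (L : ℝ) : ∫ t in (0:ℝ)..L, (0.53889 - 0.38621 * t ^ 2 + 0.0442 * t ^ 4) =
    0.53889 * L - 0.38621 * L ^ 3 / 3 + 0.0442 * L ^ 5 / 5 := by
  rw [intervalIntegral.integral_add, intervalIntegral.integral_sub]
  · simp only [intervalIntegral.integral_const_mul, integral_pow, intervalIntegral.integral_const]
    norm_num
    ring
  all_goals exact Continuous.intervalIntegrable (by fun_prop) _ _

/-- The numerical lower bound for the capacity of the collar of the extremal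
hyperbolic Dyck's surface: the half-width `a(t)` is well defined on
`[0, ℓ/12]`, and Muetzel's integral bound is at least `2.294`. -/
theorem hyperbolic_collar_capacity_lower_bound_numeric :
    (∀ t ∈ Set.Icc (0:ℝ) (ellExt / 12),
        Real.cosh t * Real.tanh (ellExt / 4) < 1) ∧
      12 * ∫ t in (0:ℝ)..(ellExt / 12),
          1 / (Hcap (collarHalfWidth t) - Hcap (-(collarHalfWidth t))) ≥ 2.294 := by
  obtain ⟨b1, b2⟩ := ell_bounds
  have hL : 0 ≤ ellExt / 12 := by linarith
  refine ⟨fun t ht => (x_bounds t ht.1 (ht.2.trans b2)).2.1, ?_⟩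
  have hm : ∫ t in (0:ℝ)..(ellExt / 12), (0.53889 - 0.38621 * t ^ 2 + 0.0442 * t ^ 4) ≤
      ∫ t in (0:ℝ)..(ellExt / 12),
          1 / (Hcap (collarHalfWidth t) - Hcap (-(collarHalfWidth t))) := by
    apply intervalIntegral.integral_mono_on hL
    · exact Continuous.intervalIntegrable (by fun_prop) _ _
    · exact ContinuousOn.intervalIntegrable_of_Icc hL integrand_cont
    · intro t ht
      exact integrand_ge t ht.1 (ht.2.trans b2)
  rw [poly_integral] at hm
  generalize ellExt / 12 = L at *
  have h3 : L ^ 3 ≤ 0.36642 ^ 3 + 0.41 * (L - 0.36642) := by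
    have : L ^ 2 + L * 0.36642 + 0.36642 ^ 2 ≤ 0.41 := by nlinarith
    nlinarith [mul_le_mul_of_nonneg_left this (sub_nonneg.2 b1)]
  have h5 : (0.36642:ℝ) ^ 5 ≤ L ^ 5 := pow_le_pow_left₀ (by norm_num) b1 5
  norm_num at h3 h5 hm ⊢
  linarith
end
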